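/- arXiv:math/0512580 — 2 statements merged into one kernel-verified Lean document; each statement's English description precedes it below -/
import Mathlib

section
/- For all n ≥ 2, the n-th Trim number satisfies t(n) < n². -/
/-- `p i` is the `i`-th prime number (1-indexed): `p 1 = 2`, `p 2 = 3`, ... -/
noncomputable def p (i : ℕ) : ℕ := Nat.nth Nat.Prime (i - 1)

/-- `aT x i` is the unique residue `r` with `0 ≤ r < p i` and `x + r ≡ 0 (mod p i)`. -/
noncomputable def aT (x i : ℕ) : ℕ := (p i - x % p i) % p i

/-- The Trim increment `d_T(n)`, expressed in terms of `t n = x`: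
`d_T(1) = 1` and, for `n ≥ 2`, `d_T(n)` is the smallest positive even integer `d`
with `d ≠ a_T(n, i)` for every `i` with `1 ≤ i ≤ n - 1`. -/
noncomputable def dTaux (n x : ℕ) : ℕ :=
  if n = 1 then 1
  else sInf {d : ℕ | 0 < d ∧ 2 ∣ d ∧ ∀ i, 1 ≤ i → i ≤ n - 1 → d ≠ aT x i}

/-- The Trim numbers: `t 1 = 2` and `t (n+1) = t n + d_T n`. -/
noncomputable def t : ℕ → ℕ
  | 0 => 0
  | 1 => 2
  | (n + 2) => t (n + 1) + dTaux (n + 1) (t (n + 1))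

/-- The Trim increment `d_T(n)`. -/
noncomputable def dT (n : ℕ) : ℕ := dTaux n (t n)

/-!
At stage `n` only the `n - 1` residues `aT (t n) i` are forbidden, so one of the `n` even numbers
`2, 4, …, 2n` is admissible and `d_T(n) ≤ 2n`. Since `n² + 2n < (n + 1)²`, the bound `t n < n²`
propagates from `t 2 = 3`.
-/

theorem exists_pos_dvd_le_notMem {k : ℕ} (hk : 0 < k) (s : Finset ℕ) :
    ∃ d, 0 < d ∧ k ∣ d ∧ d ≤ k * (s.card + 1) ∧ d ∉ s := by
  let multiples := (Finset.Icc 1 (s.card + 1)).image (k * ·)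
  have card_multiples : multiples.card = s.card + 1 := by
    rw [Finset.card_image_of_injective _ (mul_right_injective₀ hk.ne'), Nat.card_Icc,
      Nat.add_sub_cancel]
  obtain ⟨d, hd, hds⟩ : ∃ d ∈ multiples, d ∉ s :=
    Finset.exists_mem_notMem_of_card_lt_card (by omega)
  obtain ⟨j, hj, rfl⟩ := Finset.mem_image.mp hd
  obtain ⟨one_le_j, j_le⟩ := Finset.mem_Icc.mp hj
  exact ⟨k * j, Nat.mul_pos hk one_le_j, dvd_mul_right k j, Nat.mul_le_mul_left k j_le, hds⟩

theorem dTaux_le {n : ℕ} (hn : 1 ≤ n) (x : ℕ) : dTaux n x ≤ 2 * n := by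
  unfold dTaux
  split_ifs with n_eq_one
  · omega
  let residues := (Finset.Icc 1 (n - 1)).image (aT x)
  have card_residues : residues.card ≤ n - 1 := by
    simpa only [Nat.card_Icc, Nat.add_sub_cancel] using
      (Finset.card_image_le : residues.card ≤ (Finset.Icc 1 (n - 1)).card)
  obtain ⟨d, d_pos, d_even, d_le, d_notMem⟩ := exists_pos_dvd_le_notMem two_pos residues
  have d_avoids : ∀ i, 1 ≤ i → i ≤ n - 1 → d ≠ aT x i := by
    rintro i hi hin rfl
    exact d_notMem (Finset.mem_image_of_mem _ (Finset.mem_Icc.mpr ⟨hi, hin⟩))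
  calc
    sInf {d : ℕ | 0 < d ∧ 2 ∣ d ∧ ∀ i, 1 ≤ i → i ≤ n - 1 → d ≠ aT x i} ≤ d :=
      Nat.sInf_le ⟨d_pos, d_even, d_avoids⟩
    _ ≤ 2 * (residues.card + 1) := d_le
    _ ≤ 2 * n := by omega

theorem t_two : t 2 = 3 := by
  simp [t, dTaux]

theorem t_succ {n : ℕ} (hn : 1 ≤ n) : t (n + 1) = t n + dT n := by
  obtain ⟨m, rfl⟩ := Nat.exists_eq_add_of_le' hn
  rw [t, dT]

theorem t_succ_le {n : ℕ} (hn : 1 ≤ n) : t (n + 1) ≤ t n + 2 * n :=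
  (t_succ hn).trans_le (Nat.add_le_add_left (dTaux_le hn (t n)) _)

/-- For all `n ≥ 2`, the `n`-th Trim number satisfies `t n < n²`. -/
theorem stmt_3 (n : ℕ) (hn : 2 ≤ n) : t n < n ^ 2 := by
  induction n, hn using Nat.le_induction with
  | base => norm_num [t_two]
  | succ n two_le_n t_lt =>
    calc
      t (n + 1) ≤ t n + 2 * n := t_succ_le (one_le_two.trans two_le_n)
      _ < n ^ 2 + 2 * n + 1 := by omega
      _ = (n + 1) ^ 2 := by ring
end

section
/- For every n ≥ 1 there exists an index m such that the Compact number c(m) satisfies n² < c(m) ≤ (n+1)². -/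
/-- `aC x i` is the unique residue `r` with `0 ≤ r < p i` and `x + r ≡ 0 (mod p i)`. -/
noncomputable def aC (x i : ℕ) : ℕ := (p i - x % p i) % p i

/-- The Compact increment `d_c(n)`, expressed in terms of `c n = x`:
`d_c(1) = 1` and, for `n ≥ 2`, `d_c(n)` is the smallest positive even integer `d`
with `d ≠ a_c(n, i)` for every `i ≥ 1` with `p i ^ 2 ≤ c n`. -/
noncomputable def dCaux (n x : ℕ) : ℕ :=
  if n = 1 then 1
  else sInf {d : ℕ | 0 < d ∧ 2 ∣ d ∧ ∀ i, 1 ≤ i → p i ^ 2 ≤ x → d ≠ aC x i}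

/-- The Compact numbers: `c 1 = 2` and `c (n+1) = c n + d_c n`. -/
noncomputable def c : ℕ → ℕ
  | 0 => 0
  | 1 => 2
  | (n + 2) => c (n + 1) + dCaux (n + 1) (c (n + 1))

/-- The Compact increment `d_c(n)`. -/
noncomputable def dC (n : ℕ) : ℕ := dCaux n (c n)

/-!
An increment of the Compact number `x` has to avoid one residue for each of the `π (√x)` primes up
to `√x`, so by the pigeonhole principle one of the first `π (√x) + 1` positive even numbers is
admissible. If `x ≤ n ^ 2` then `π (√x) + 1 ≤ n`, so the first Compact number beyond `n ^ 2` is at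
most `n ^ 2 + 2 * n < (n + 1) ^ 2`.
-/

open scoped Nat.Prime

theorem primeCounting_lt_self {n : ℕ} (hn : n ≠ 0) : π n < n := by
  have h : n + 1 ≤ Nat.nth Nat.Prime (n - 1) := by
    have := Nat.add_two_le_nth_prime (n - 1)
    omega
  have hle : π n ≤ n - 1 := Nat.le_nth_of_count_le h
  omega

theorem p_sq_le_iff {i x : ℕ} (hi : 1 ≤ i) : p i ^ 2 ≤ x ↔ i ≤ π x.sqrt :=
  calc
    p i ^ 2 ≤ x ↔ p i < x.sqrt + 1 := by rw [Nat.lt_succ_iff, Nat.le_sqrt']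
    _ ↔ i - 1 < π x.sqrt := (Nat.lt_nth_iff_count_lt Nat.infinite_setOfPred_prime).symm
    _ ↔ i ≤ π x.sqrt := by omega

/-- The even increments allowed at a Compact number `x`: the set whose least element is `dCaux n x`
for `n ≠ 1`. -/
def admissibleIncrements (x : ℕ) : Set ℕ :=
  {d | 0 < d ∧ 2 ∣ d ∧ ∀ i, 1 ≤ i → p i ^ 2 ≤ x → d ≠ aC x i}

theorem exists_mem_admissibleIncrements_le (x : ℕ) :
    ∃ d ∈ admissibleIncrements x, d ≤ 2 * (π x.sqrt + 1) := by
  let forbidden := (Finset.Icc 1 (π x.sqrt)).image (aC x)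
  let candidates := (Finset.Icc 1 (π x.sqrt + 1)).image (2 * ·)
  have hcard : forbidden.card < candidates.card := by
    calc
      forbidden.card ≤ π x.sqrt := by
        simpa using Finset.card_image_le (s := Finset.Icc 1 (π x.sqrt)) (f := aC x)
      _ < π x.sqrt + 1 := Nat.lt_succ_self _
      _ = candidates.card := by
        rw [Finset.card_image_of_injective _ (mul_right_injective₀ two_ne_zero)]
        simp
  obtain ⟨d, hd, hd_allowed⟩ := Finset.exists_mem_notMem_of_card_lt_card hcard
  obtain ⟨j, hj, rfl⟩ := Finset.mem_image.1 hd
  obtain ⟨hj_pos, hj_le⟩ := Finset.mem_Icc.1 hj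
  refine ⟨2 * j, ⟨by omega, dvd_mul_right 2 j, fun i hi hpi heq => hd_allowed ?_⟩, by omega⟩
  exact Finset.mem_image.2 ⟨i, Finset.mem_Icc.2 ⟨hi, (p_sq_le_iff hi).1 hpi⟩, heq.symm⟩

theorem dCaux_of_ne_one {n : ℕ} (hn : n ≠ 1) (x : ℕ) :
    dCaux n x = sInf (admissibleIncrements x) :=
  if_neg hn

theorem dCaux_pos (n x : ℕ) : 0 < dCaux n x := by
  obtain rfl | hn := eq_or_ne n 1
  · simp [dCaux]
  · obtain ⟨d, hd, -⟩ := exists_mem_admissibleIncrements_le x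
    rw [dCaux_of_ne_one hn]
    exact (Nat.sInf_mem ⟨d, hd⟩).1

theorem dCaux_le (n x : ℕ) : dCaux n x ≤ 2 * (π x.sqrt + 1) := by
  obtain rfl | hn := eq_or_ne n 1
  · rw [dCaux, if_pos rfl]
    omega
  · obtain ⟨d, hd, hd_le⟩ := exists_mem_admissibleIncrements_le x
    rw [dCaux_of_ne_one hn]
    exact (Nat.sInf_le hd).trans hd_le

theorem c_succ {n : ℕ} (hn : n ≠ 0) : c (n + 1) = c n + dC n := by
  obtain ⟨k, rfl⟩ := Nat.exists_eq_succ_of_ne_zero hn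
  rfl

theorem c_strictMono : StrictMono c := by
  refine strictMono_nat_of_lt_succ fun n => ?_
  obtain rfl | hn := eq_or_ne n 0
  · simp [c]
  · rw [c_succ hn]
    exact Nat.lt_add_of_pos_right (dCaux_pos n (c n))

theorem c_succ_le (n : ℕ) : c (n + 1) ≤ c n + 2 * (π (c n).sqrt + 1) := by
  obtain rfl | hn := eq_or_ne n 0
  · simp [c]
  · rw [c_succ hn]
    exact Nat.add_le_add_left (dCaux_le n (c n)) _

/-- For every `n ≥ 1` there exists an index `m` such that the Compact number
`c m` satisfies `n² < c m ≤ (n+1)²`. -/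
theorem stmt_7 (n : ℕ) (hn : 1 ≤ n) :
    ∃ m : ℕ, n ^ 2 < c m ∧ c m ≤ (n + 1) ^ 2 := by
  have hex : ∃ m, n ^ 2 < c m := ⟨n ^ 2 + 1, c_strictMono.le_apply⟩
  obtain ⟨k, hk, hk_succ⟩ :=
    Nat.exists_not_and_succ_of_not_zero_of_exists (p := fun m => n ^ 2 < c m) (by simp [c]) hex
  have hck : c k ≤ n ^ 2 := not_lt.1 hk
  have hsqrt : (c k).sqrt ≤ n := (Nat.sqrt_le_sqrt hck).trans_eq (Nat.sqrt_eq' n)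
  have hπ : π (c k).sqrt + 1 ≤ n :=
    (Nat.monotone_primeCounting hsqrt).trans_lt (primeCounting_lt_self (Nat.ne_of_gt hn))
  refine ⟨k + 1, hk_succ, ?_⟩
  calc
    c (k + 1) ≤ c k + 2 * (π (c k).sqrt + 1) := c_succ_le k
    _ ≤ n ^ 2 + 2 * n := by gcongr
    _ ≤ (n + 1) ^ 2 := by linarith
end
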